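/- Let L ⊆ ℝ^n be a star set with Borel measurable radial function ρ_L, and let m > 0 be real. Define the m-th dual volume of the central section by Ṽ_m(L ∩ w^⊥) = b_{n−1} · (F ρ_L^m)(w), where (F ρ_L^m)(w) is the average of ρ_L^m over the great subsphere S^{n-1} ∩ w^⊥. Then ∫_{S^{n-1}} Ṽ_m(L ∩ w^⊥) · (1 − w_n²)^{−(n−1)/2} d*w = b_{n−1} · ∫_{S^{n-1}} ρ_L(θ)^m |θ_n|^{−1} d*θ, the equality holding in [0,∞]. (Case k = n−1 of the paper's identity ∫_{G_{n,k}} Ṽ_m(L ∩ τ₀) (cos d(τ₀))^{−(n−1)} d*τ₀ = b_k ∫_{S^{n-1}} ρ_L^m(θ) |θ_n|^{−(n−k)} d*θ.) -/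

import Mathlib

open MeasureTheory Metric Real
open scoped ENNReal NNReal

noncomputable section

/-- The normalized (probability) surface measure `d*θ` on the unit sphere of
`EuclideanSpace ℝ (Fin n)`. -/
def sphMeasure (n : ℕ) : Measure (sphere (0 : EuclideanSpace ℝ (Fin n)) 1) :=
  ((volume : Measure (EuclideanSpace ℝ (Fin n))).toSphere Set.univ)⁻¹ •
    (volume : Measure (EuclideanSpace ℝ (Fin n))).toSphere

/-- The hyperplane Radon transform: `Rf(θ,t) = ∫_{θ^⊥} f(tθ + y) dy`, where `θ^⊥` carries its
canonical Lebesgue measure as an (n-1)-dimensional inner product space. -/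
def Radon (n : ℕ) (f : EuclideanSpace ℝ (Fin n) → ℝ≥0∞)
    (θ : sphere (0 : EuclideanSpace ℝ (Fin n)) 1) (t : ℝ) : ℝ≥0∞ :=
  ∫⁻ y : ((ℝ ∙ (θ : EuclideanSpace ℝ (Fin n)))ᗮ),
    f (t • (θ : EuclideanSpace ℝ (Fin n)) + (y : EuclideanSpace ℝ (Fin n)))

/-- The codimension-one Funk transform: the average of `φ` over the great subsphere
`S^{n-1} ∩ w^⊥` (the unit sphere of the subspace `w^⊥`, with its normalized surface
measure). -/
def Funk (n : ℕ) (φ : sphere (0 : EuclideanSpace ℝ (Fin n)) 1 → ℝ≥0∞)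
    (w : sphere (0 : EuclideanSpace ℝ (Fin n)) 1) : ℝ≥0∞ :=
  ((volume : Measure ((ℝ ∙ (w : EuclideanSpace ℝ (Fin n)))ᗮ)).toSphere Set.univ)⁻¹ *
    ∫⁻ v : sphere (0 : ((ℝ ∙ (w : EuclideanSpace ℝ (Fin n)))ᗮ)) 1,
      φ ⟨((v : ((ℝ ∙ (w : EuclideanSpace ℝ (Fin n)))ᗮ)) : EuclideanSpace ℝ (Fin n)), by
          have hv := v.2
          simp only [mem_sphere_iff_norm, sub_zero] at hv ⊢
          rwa [Submodule.coe_norm] at hv⟩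
      ∂((volume : Measure ((ℝ ∙ (w : EuclideanSpace ℝ (Fin n)))ᗮ)).toSphere)

/-- `b_m = π^{m/2}/Γ(m/2+1)`, the volume of the m-dimensional unit ball. -/
def ballVol (m : ℕ) : ℝ := Real.pi ^ ((m : ℝ) / 2) / Real.Gamma ((m : ℝ) / 2 + 1)

/-- The radial function of a star set: `ρ_L(θ) = sup {c ≥ 0 : cθ ∈ L} ∈ [0,∞]`. -/
def radial (n : ℕ) (L : Set (EuclideanSpace ℝ (Fin n)))
    (θ : sphere (0 : EuclideanSpace ℝ (Fin n)) 1) : ℝ≥0∞ :=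
  ⨆ r : {r : ℝ≥0 // (r : ℝ) • (θ : EuclideanSpace ℝ (Fin n)) ∈ L}, (r.1 : ℝ≥0∞)

/-!
Integration over flags `(w, v)`, where `w` is a unit vector and `v` a unit vector of `w⊥`, is
symmetric in `w` and `v`. Indeed, let `e` be a unit vector and replace spheres by Euclidean spaces
with the help of a radial cutoff. The hyperplane `w⊥` is a graph over `e⊥`, parametrized by an
oblique projection with Jacobian `|⟪w, e⟫|⁻¹`, and in the splitting of the ambient space into `e⊥`
and the line of `e` the vectors `z + s e` and `y + t e` are orthogonal exactly when
`t = -⟪z, y⟫ / s`. The flag measure becomes `dz dy ds / |s|`, with a symmetric density, and the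
exchange of the two vectors is the substitution `s ↦ -⟪z, y⟫ / s`, which preserves `ds / |s|`.

The weight `(1 - ⟪w, e⟫ ^ 2) ^ (-k / 2)` is `‖P w‖ ^ (-k)` for the orthogonal projection `P` onto
`e⊥`, and `k` is the dimension of `v⊥`. After the exchange it is integrated over the unit sphere of
`v⊥`, and `P` maps `v⊥` linearly onto `e⊥` with Jacobian `|⟪v, e⟫|`, so that this integral is
`|⟪v, e⟫|⁻¹` times the total surface measure of the unit sphere of `e⊥`.
-/

open Module (finrank)
open scoped RealInnerProductSpace

section Hyperplane

variable {E : Type*} [NormedAddCommGroup E] [InnerProductSpace ℝ E]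

lemma orthogonal_span_singleton_ne_top {w : E} (hw : w ≠ 0) : (ℝ ∙ w)ᗮ ≠ ⊤ := fun h ↦
  hw <| inner_self_eq_zero.1 <|
    Submodule.mem_orthogonal_singleton_iff_inner_right.1 (h ▸ Submodule.mem_top : w ∈ (ℝ ∙ w)ᗮ)

lemma finrank_orthogonal_span_singleton_add_one [FiniteDimensional ℝ E] {w : E} (hw : w ≠ 0) :
    finrank ℝ (ℝ ∙ w)ᗮ + 1 = finrank ℝ E := by
  rw [← (ℝ ∙ w).finrank_add_finrank_orthogonal, finrank_span_singleton hw, add_comm]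

lemma nontrivial_orthogonal_span_singleton [FiniteDimensional ℝ E] (hE : 1 < finrank ℝ E) {w : E}
    (hw : w ≠ 0) : Nontrivial (ℝ ∙ w)ᗮ :=
  Module.nontrivial_of_finrank_pos (R := ℝ) <| by
    have := finrank_orthogonal_span_singleton_add_one hw
    omega

lemma orthogonalProjectionOnto_ne_zero_of_inner_ne_zero {w e y : E} (hwe : ⟪w, e⟫ ≠ 0)
    (hyw : y ∈ (ℝ ∙ w)ᗮ) (hy : y ≠ 0) : (ℝ ∙ e)ᗮ.orthogonalProjectionOnto y ≠ 0 := by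
  intro h
  rw [Submodule.orthogonalProjectionOnto_eq_zero_iff, Submodule.orthogonal_orthogonal,
    Submodule.mem_span_singleton] at h
  obtain ⟨c, rfl⟩ := h
  rw [Submodule.mem_orthogonal_singleton_iff_inner_right, inner_smul_right] at hyw
  exact hy (by rw [(mul_eq_zero.1 hyw).resolve_right hwe, zero_smul])

lemma one_sub_inner_sq_eq_norm_orthogonalProjectionOnto_sq {w e : E} (hw : ‖w‖ = 1)
    (he : ‖e‖ = 1) : 1 - ⟪w, e⟫ ^ 2 = ‖(ℝ ∙ e)ᗮ.orthogonalProjectionOnto w‖ ^ 2 := by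
  have hproj : ‖(ℝ ∙ e).orthogonalProjectionOnto w‖ ^ 2 = ⟪w, e⟫ ^ 2 := by
    rw [Submodule.coe_norm, ← Submodule.starProjection_apply,
      Submodule.starProjection_unit_singleton ℝ he, norm_smul, he, mul_one, Real.norm_eq_abs,
      sq_abs, real_inner_comm]
  have hpythagoras := Submodule.norm_sq_eq_add_norm_sq_projection w (ℝ ∙ e)
  rw [hw, hproj] at hpythagoras
  linarith

end Hyperplane

/-- The indicator function of `(1, e]`, a radial cutoff of total mass one for the scale-invariant
measure `dr / r`; it turns integrals over a sphere into integrals over the ambient space. -/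
def logCutoff : ℝ → ℝ≥0∞ := (Set.Ioc 1 (Real.exp 1)).indicator 1

@[fun_prop]
lemma measurable_logCutoff : Measurable logCutoff :=
  measurable_one.indicator measurableSet_Ioc

lemma lintegral_Ioi_inv_mul_logCutoff_mul {c : ℝ} (hc : 0 < c) :
    ∫⁻ r in Set.Ioi (0 : ℝ), ENNReal.ofReal r⁻¹ * logCutoff (r * c) = 1 := by
  have hpos : 0 < 1 / c := by positivity
  have hle : 1 / c ≤ Real.exp 1 / c := by
    gcongr
    exact Real.one_le_exp zero_le_one
  have hzero : (0 : ℝ) ∉ Set.uIcc (1 / c) (Real.exp 1 / c) := by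
    rw [Set.uIcc_of_le hle]
    exact fun h ↦ hpos.not_ge h.1
  have hsub : Set.Ioc (1 / c) (Real.exp 1 / c) ⊆ Set.Ioi 0 := fun x hx ↦ hpos.trans hx.1
  have hcutoff (r : ℝ) : ENNReal.ofReal r⁻¹ * logCutoff (r * c) =
      (Set.Ioc (1 / c) (Real.exp 1 / c)).indicator (fun r ↦ ENNReal.ofReal r⁻¹) r := by
    simp only [logCutoff, Set.indicator_apply, Set.mem_Ioc, div_lt_iff₀ hc, le_div_iff₀ hc]
    split_ifs <;> simp
  simp_rw [hcutoff]
  rw [setLIntegral_indicator measurableSet_Ioc, Set.inter_eq_left.2 hsub,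
    ← ofReal_integral_eq_lintegral_ofReal, ← intervalIntegral.integral_of_le hle,
    integral_inv hzero, div_div_div_cancel_right₀ hc.ne', div_one, Real.log_exp,
    ENNReal.ofReal_one]
  · exact (intervalIntegral.intervalIntegrable_inv (fun x hx h ↦ hzero (h ▸ hx)) continuousOn_id).1
  · filter_upwards [ae_restrict_mem measurableSet_Ioc] with r hr
    exact inv_nonneg.2 (hsub hr).le

/-- The density `‖x‖ ^ (-d)`, cut off to an annulus; on every ray it has mass one for the measure
`r ^ (d - 1) dr` of polar coordinates in dimension `d`. -/
def radialWeight {E : Type*} [NormedAddCommGroup E] (d : ℕ) (x : E) : ℝ≥0∞ :=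
  ‖x‖ₑ⁻¹ ^ d * logCutoff ‖x‖

@[fun_prop]
lemma measurable_radialWeight {E : Type*} [NormedAddCommGroup E] [MeasurableSpace E]
    [OpensMeasurableSpace E] (d : ℕ) : Measurable (radialWeight d : E → ℝ≥0∞) := by
  unfold radialWeight
  fun_prop

section Scaling

variable {E : Type*} [NormedAddCommGroup E] [NormedSpace ℝ E]

lemma inv_norm_smul_smul_of_pos {r : ℝ} (hr : 0 < r) (x : E) :
    ‖r • x‖⁻¹ • r • x = ‖x‖⁻¹ • x := by
  rw [norm_smul, Real.norm_of_nonneg hr.le, mul_inv, smul_smul, mul_right_comm,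
    inv_mul_cancel₀ hr.ne', one_mul]

lemma inv_enorm_smul_of_pos {r : ℝ} (hr : 0 < r) (x : E) :
    ‖r • x‖ₑ⁻¹ = ENNReal.ofReal r⁻¹ * ‖x‖ₑ⁻¹ := by
  rw [enorm_smul, Real.enorm_of_nonneg hr.le, ENNReal.ofReal_inv_of_pos hr,
    ENNReal.mul_inv (.inl (by simpa)) (.inl ENNReal.ofReal_ne_top)]

end Scaling

section PolarCoordinates

variable {E : Type*} [NormedAddCommGroup E] [NormedSpace ℝ E] [FiniteDimensional ℝ E]
  [MeasurableSpace E] [BorelSpace E] (μ : Measure E) [μ.IsAddHaarMeasure]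

lemma lintegral_eq_lintegral_toSphere_lintegral_Ioi [Nontrivial E] {f : E → ℝ≥0∞}
    (hf : Measurable f) :
    ∫⁻ x, f x ∂μ =
      ∫⁻ θ, (∫⁻ r in Set.Ioi (0 : ℝ), ENNReal.ofReal (r ^ (finrank ℝ E - 1)) * f (r • (θ : E)))
        ∂μ.toSphere := by
  have hF : Measurable fun p : sphere (0 : E) 1 × Set.Ioi (0 : ℝ) ↦ f (p.2.1 • (p.1 : E)) := by
    fun_prop
  calc
    ∫⁻ x, f x ∂μ = ∫⁻ x : ({0}ᶜ : Set E), f x ∂μ.comap (↑) := by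
      rw [lintegral_subtype_comap (measurableSet_singleton _).compl f, restrict_compl_singleton]
    _ = ∫⁻ p, f (p.2.1 • (p.1 : E)) ∂μ.toSphere.prod (.volumeIoiPow (finrank ℝ E - 1)) := by
      rw [← μ.measurePreserving_homeomorphUnitSphereProd.lintegral_comp hF]
      refine lintegral_congr fun x ↦ ?_
      have hx : ‖(x : E)‖ ≠ 0 := norm_ne_zero_iff.2 x.2
      simp [smul_smul, hx]
    _ = ∫⁻ θ, (∫⁻ r, f (r.1 • (θ : E)) ∂.volumeIoiPow (finrank ℝ E - 1)) ∂μ.toSphere :=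
      lintegral_prod _ hF.aemeasurable
    _ = _ := by
      refine lintegral_congr fun θ ↦ ?_
      rw [Measure.volumeIoiPow,
        lintegral_withDensity_eq_lintegral_mul _ (by fun_prop) (by fun_prop)]
      exact lintegral_subtype_comap measurableSet_Ioi
        fun r : ℝ ↦ ENNReal.ofReal (r ^ (finrank ℝ E - 1)) * f (r • (θ : E))

lemma lintegral_mul_logCutoff_eq_lintegral_toSphere [Nontrivial E] {f : E → ℝ≥0∞}
    (hf : Measurable f)
    (hfsmul : ∀ r : ℝ, 0 < r → ∀ x, f (r • x) = ENNReal.ofReal r⁻¹ ^ finrank ℝ E * f x)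
    {N : E → ℝ} (hN : Measurable N) (hNsmul : ∀ r : ℝ, 0 < r → ∀ x, N (r • x) = r * N x)
    (hNpos : ∀ x, x ≠ 0 → 0 < N x) :
    ∫⁻ x, f x * logCutoff (N x) ∂μ = ∫⁻ θ, f θ ∂μ.toSphere := by
  rw [lintegral_eq_lintegral_toSphere_lintegral_Ioi μ (by fun_prop)]
  refine lintegral_congr fun θ ↦ ?_
  have hpow {r : ℝ} (hr : 0 < r) :
      ENNReal.ofReal (r ^ (finrank ℝ E - 1)) * ENNReal.ofReal r⁻¹ ^ finrank ℝ E =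
        ENNReal.ofReal r⁻¹ := by
    obtain ⟨k, hk⟩ := Nat.exists_eq_add_one.2 (Module.finrank_pos (R := ℝ) (M := E))
    rw [hk, ← ENNReal.ofReal_pow (by positivity), ← ENNReal.ofReal_mul (by positivity)]
    congr 1
    rw [Nat.add_sub_cancel, pow_succ, ← mul_assoc, ← mul_pow, mul_inv_cancel₀ hr.ne', one_pow,
      one_mul]
  calc
    ∫⁻ r in Set.Ioi (0 : ℝ), ENNReal.ofReal (r ^ (finrank ℝ E - 1)) *
          (f (r • (θ : E)) * logCutoff (N (r • (θ : E))))
        = ∫⁻ r in Set.Ioi (0 : ℝ), f θ * (ENNReal.ofReal r⁻¹ * logCutoff (r * N θ)) := by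
      refine setLIntegral_congr_fun measurableSet_Ioi fun r hr ↦ ?_
      rw [hfsmul r hr, hNsmul r hr, mul_assoc, ← mul_assoc (ENNReal.ofReal (r ^ _)), hpow hr,
        mul_left_comm]
    _ = f θ := by
      rw [lintegral_const_mul _ (by fun_prop),
        lintegral_Ioi_inv_mul_logCutoff_mul (hNpos _ (ne_zero_of_mem_unit_sphere θ)), mul_one]

lemma lintegral_toSphere_eq_lintegral_radialWeight [Nontrivial E] {f : E → ℝ≥0∞}
    (hf : Measurable f) :
    ∫⁻ θ, f θ ∂μ.toSphere =
      ∫⁻ x, radialWeight (finrank ℝ E) x * f (‖x‖⁻¹ • x) ∂μ := by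
  calc
    ∫⁻ θ, f θ ∂μ.toSphere
        = ∫⁻ θ, ‖(θ : E)‖ₑ⁻¹ ^ finrank ℝ E * f (‖(θ : E)‖⁻¹ • (θ : E)) ∂μ.toSphere := by
      simp [← ofReal_norm]
    _ = ∫⁻ x, ‖x‖ₑ⁻¹ ^ finrank ℝ E * f (‖x‖⁻¹ • x) * logCutoff ‖x‖ ∂μ := by
      refine (lintegral_mul_logCutoff_eq_lintegral_toSphere μ
        (f := fun x ↦ ‖x‖ₑ⁻¹ ^ finrank ℝ E * f (‖x‖⁻¹ • x)) (by fun_prop) (fun r hr x ↦ ?_)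
        measurable_norm (fun r hr x ↦ ?_) fun x ↦ norm_pos_iff.2).symm
      · rw [inv_norm_smul_smul_of_pos hr, inv_enorm_smul_of_pos hr, mul_pow, mul_assoc]
      · rw [norm_smul, Real.norm_of_nonneg hr.le]
    _ = _ := by
      simp only [radialWeight, mul_right_comm]

end PolarCoordinates

lemma lintegral_indicator_Ioc_add_mul (b : ℝ) {c : ℝ} (hc : c ≠ 0) :
    ∫⁻ s : ℝ, (Set.Ioc (0 : ℝ) 1).indicator 1 (b + s * c) = ‖c‖ₑ⁻¹ := by
  have hset : MeasurableSet ((fun s : ℝ ↦ b + s * c) ⁻¹' Set.Ioc 0 1) :=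
    (by fun_prop : Measurable fun s : ℝ ↦ b + s * c) measurableSet_Ioc
  calc
    ∫⁻ s : ℝ, (Set.Ioc (0 : ℝ) 1).indicator (1 : ℝ → ℝ≥0∞) (b + s * c)
        = volume ((· * c) ⁻¹' ((b + ·) ⁻¹' Set.Ioc (0 : ℝ) 1)) :=
      lintegral_indicator_one hset
    _ = ‖c‖ₑ⁻¹ := by
      rw [Real.volume_preimage_mul_right hc, measure_preimage_add, Real.volume_Ioc, sub_zero,
        ENNReal.ofReal_one, mul_one, abs_inv, ENNReal.ofReal_inv_of_pos (abs_pos.2 hc),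
        ← Real.enorm_eq_ofReal_abs]

section ObliqueProjection

variable {E : Type*} [NormedAddCommGroup E] [InnerProductSpace ℝ E]

/-- The projection of `x` onto the hyperplane `w⊥` along the line spanned by `e`. It makes sense
only for `⟪w, e⟫ ≠ 0`: otherwise division by zero turns it into the identity. -/
def obliqueProj (w e x : E) : E := x - (⟪w, x⟫ / ⟪w, e⟫) • e

@[fun_prop]
lemma measurable_obliqueProj [MeasurableSpace E] [BorelSpace E] [SecondCountableTopology E]
    {α : Type*} [MeasurableSpace α] {w e x : α → E} (hw : Measurable w) (he : Measurable e)
    (hx : Measurable x) : Measurable fun a ↦ obliqueProj (w a) (e a) (x a) := by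
  unfold obliqueProj
  fun_prop

lemma obliqueProj_mem_orthogonal {w e : E} (hwe : ⟪w, e⟫ ≠ 0) (x : E) :
    obliqueProj w e x ∈ (ℝ ∙ w)ᗮ := by
  rw [Submodule.mem_orthogonal_singleton_iff_inner_right, obliqueProj, inner_sub_right,
    inner_smul_right, div_mul_cancel₀ _ hwe, sub_self]

lemma obliqueProj_add_smul_self {w e : E} (hwe : ⟪w, e⟫ ≠ 0) (x : E) (s : ℝ) :
    obliqueProj w e (x + s • e) = obliqueProj w e x := by
  simp only [obliqueProj, inner_add_right, inner_smul_right, add_div, mul_div_cancel_right₀ _ hwe,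
    add_smul]
  abel

lemma obliqueProj_add_smul_of_mem_orthogonal {w e y : E} (hy : y ∈ (ℝ ∙ w)ᗮ) (s : ℝ) :
    obliqueProj w e (y + s • w) = y + s • obliqueProj w e w := by
  rw [Submodule.mem_orthogonal_singleton_iff_inner_right] at hy
  simp only [obliqueProj, inner_add_right, inner_smul_right, hy, zero_add, mul_div_assoc, mul_smul,
    smul_sub, add_sub_assoc]

lemma obliqueProj_smul_left {r : ℝ} (hr : r ≠ 0) (w e x : E) :
    obliqueProj (r • w) e x = obliqueProj w e x := by
  simp only [obliqueProj, real_inner_smul_left, mul_div_mul_left _ _ hr]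

end ObliqueProjection

section Slicing

variable {E : Type*} [NormedAddCommGroup E] [InnerProductSpace ℝ E] [FiniteDimensional ℝ E]
  [MeasurableSpace E] [BorelSpace E]

lemma measurePreserving_orthogonal_add_smul {u : E} (hu : ‖u‖ = 1) :
    MeasurePreserving (fun p : (ℝ ∙ u)ᗮ × ℝ ↦ (p.1 : E) + p.2 • u) (volume.prod volume) := by
  let toLine := LinearIsometryEquiv.toSpanUnitSingleton (𝕜 := ℝ) u hu
  have hline : MeasurePreserving (Prod.map toLine (id : (ℝ ∙ u)ᗮ → (ℝ ∙ u)ᗮ))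
      (volume.prod volume) (volume.prod volume) :=
    toLine.measurePreserving.prod (.id _)
  have hsplit := (ℝ ∙ u).orthogonalDecomposition.symm.measurePreserving.comp
    ((WithLp.volume_preserving_toLp (ℝ ∙ u) (ℝ ∙ u)ᗮ).comp
      (hline.comp Measure.measurePreserving_swap))
  convert hsplit using 1
  ext p
  exact add_comm _ _

lemma lintegral_eq_lintegral_orthogonal_lintegral {u : E} (hu : ‖u‖ = 1) {f : E → ℝ≥0∞}
    (hf : Measurable f) :
    ∫⁻ x, f x = ∫⁻ y : (ℝ ∙ u)ᗮ, ∫⁻ s : ℝ, f (y + s • u) := by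
  have h := measurePreserving_orthogonal_add_smul hu
  rw [← h.lintegral_comp hf]
  exact lintegral_prod _ (hf.comp h.measurable).aemeasurable

lemma lintegral_slab_comp_obliqueProj_eq_lintegral_orthogonal_left {w e : E} (hw : ‖w‖ = 1)
    (hwe : ⟪w, e⟫ ≠ 0) {f : E → ℝ≥0∞} (hf : Measurable f) :
    ∫⁻ x, (Set.Ioc (0 : ℝ) 1).indicator 1 ⟪w, x⟫ * f (obliqueProj w e x) =
      ∫⁻ y : (ℝ ∙ w)ᗮ, f y := by
  have hI : Measurable ((Set.Ioc (0 : ℝ) 1).indicator (1 : ℝ → ℝ≥0∞)) :=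
    measurable_one.indicator measurableSet_Ioc
  have hinner (y : (ℝ ∙ w)ᗮ) (s : ℝ) : ⟪w, y + s • w⟫ = s := by
    rw [inner_add_right, Submodule.mem_orthogonal_singleton_iff_inner_right.1 y.2,
      inner_smul_right, real_inner_self_eq_norm_sq, hw]
    ring
  let v : (ℝ ∙ w)ᗮ := ⟨obliqueProj w e w, obliqueProj_mem_orthogonal hwe w⟩
  calc
    _ = ∫⁻ y : (ℝ ∙ w)ᗮ, ∫⁻ s : ℝ, (Set.Ioc (0 : ℝ) 1).indicator 1 s * f ↑(y + s • v) := by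
      rw [lintegral_eq_lintegral_orthogonal_lintegral hw (by fun_prop)]
      simp_rw [hinner, obliqueProj_add_smul_of_mem_orthogonal (Subtype.coe_prop _)]
      rfl
    _ = ∫⁻ s : ℝ, (Set.Ioc (0 : ℝ) 1).indicator 1 s * ∫⁻ y : (ℝ ∙ w)ᗮ, f ↑(y + s • v) := by
      rw [lintegral_lintegral_swap (by fun_prop)]
      exact lintegral_congr fun s ↦ lintegral_const_mul _ (by fun_prop)
    _ = ∫⁻ s : ℝ, (Set.Ioc (0 : ℝ) 1).indicator 1 s * ∫⁻ y : (ℝ ∙ w)ᗮ, f y :=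
      lintegral_congr fun s ↦ by
        rw [lintegral_add_right_eq_self (fun y : (ℝ ∙ w)ᗮ ↦ f y) (s • v)]
    _ = ∫⁻ y : (ℝ ∙ w)ᗮ, f y := by
      rw [lintegral_mul_const _ hI, lintegral_indicator_one measurableSet_Ioc]
      simp

lemma lintegral_slab_comp_obliqueProj_eq_lintegral_orthogonal_right {w e : E} (he : ‖e‖ = 1)
    (hwe : ⟪w, e⟫ ≠ 0) {f : E → ℝ≥0∞} (hf : Measurable f) :
    ∫⁻ x, (Set.Ioc (0 : ℝ) 1).indicator 1 ⟪w, x⟫ * f (obliqueProj w e x) =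
      ‖⟪w, e⟫‖ₑ⁻¹ * ∫⁻ y : (ℝ ∙ e)ᗮ, f (obliqueProj w e y) := by
  have hI : Measurable ((Set.Ioc (0 : ℝ) 1).indicator (1 : ℝ → ℝ≥0∞)) :=
    measurable_one.indicator measurableSet_Ioc
  rw [lintegral_eq_lintegral_orthogonal_lintegral he (by fun_prop),
    ← lintegral_const_mul _ (by fun_prop)]
  refine lintegral_congr fun y ↦ ?_
  simp_rw [obliqueProj_add_smul_self hwe, inner_add_right, inner_smul_right]
  rw [lintegral_mul_const _ (by fun_prop), lintegral_indicator_Ioc_add_mul _ hwe]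

-- Both sides compute the integral of `f ∘ obliqueProj w e` over the slab `0 < ⟪w, x⟫ ≤ 1`.
lemma lintegral_orthogonal_eq_lintegral_obliqueProj {w e : E} (hw : ‖w‖ = 1) (he : ‖e‖ = 1)
    (hwe : ⟪w, e⟫ ≠ 0) {f : E → ℝ≥0∞} (hf : Measurable f) :
    ∫⁻ y : (ℝ ∙ w)ᗮ, f y = ‖⟪w, e⟫‖ₑ⁻¹ * ∫⁻ y : (ℝ ∙ e)ᗮ, f (obliqueProj w e y) := by
  rw [← lintegral_slab_comp_obliqueProj_eq_lintegral_orthogonal_left hw hwe hf,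
    lintegral_slab_comp_obliqueProj_eq_lintegral_orthogonal_right he hwe hf]

lemma lintegral_orthogonal_comp_orthogonalProjectionOnto {w e : E} (hw : ‖w‖ = 1) (he : ‖e‖ = 1)
    (hwe : ⟪w, e⟫ ≠ 0) {f : (ℝ ∙ e)ᗮ → ℝ≥0∞} (hf : Measurable f) :
    ∫⁻ y : (ℝ ∙ w)ᗮ, f ((ℝ ∙ e)ᗮ.orthogonalProjectionOnto y) =
      ‖⟪w, e⟫‖ₑ⁻¹ * ∫⁻ y, f y := by
  rw [lintegral_orthogonal_eq_lintegral_obliqueProj hw he hwe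
    (f := fun x ↦ f ((ℝ ∙ e)ᗮ.orthogonalProjectionOnto x)) (by fun_prop)]
  congr 1
  refine lintegral_congr fun y ↦ ?_
  rw [obliqueProj, map_sub, map_smul, Submodule.orthogonalProjectionOnto_mem_subspace_eq_self,
    Submodule.orthogonalProjectionOnto_orthogonalComplement_singleton_eq_zero, smul_zero, sub_zero]

end Slicing

lemma lintegral_inv_enorm_mul_comp_div {a : ℝ} (ha : a ≠ 0) (h : ℝ → ℝ≥0∞) :
    ∫⁻ s : ℝ, ‖s‖ₑ⁻¹ * h (a / s) = ∫⁻ t : ℝ, ‖t‖ₑ⁻¹ * h t := by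
  have himage : (a / ·) '' ({0}ᶜ : Set ℝ) = {0}ᶜ := by
    ext t
    refine ⟨?_, fun ht ↦ ⟨a / t, div_ne_zero ha ht, div_div_cancel₀ ha⟩⟩
    rintro ⟨s, hs, rfl⟩
    exact div_ne_zero ha hs
  have hderiv (s : ℝ) (hs : s ∈ ({0}ᶜ : Set ℝ)) :
      HasDerivWithinAt (a / ·) (-a / s ^ 2) {0}ᶜ s := by
    simpa [div_eq_mul_inv] using ((hasDerivAt_inv hs).const_mul a).hasDerivWithinAt
  have hinj : Set.InjOn (a / ·) ({0}ᶜ : Set ℝ) := fun s _ t _ hst ↦ by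
    simpa only [div_div_cancel₀ ha] using congrArg (a / ·) hst
  have hjacobian {s : ℝ} (hs : s ≠ 0) :
      ‖s‖ₑ⁻¹ = ENNReal.ofReal |-a / s ^ 2| * ‖a / s‖ₑ⁻¹ := by
    have has : 0 < |a / s| := abs_pos.2 (div_ne_zero ha hs)
    rw [Real.enorm_eq_ofReal_abs, Real.enorm_eq_ofReal_abs,
      ← ENNReal.ofReal_inv_of_pos (abs_pos.2 hs), ← ENNReal.ofReal_inv_of_pos has,
      ← ENNReal.ofReal_mul (abs_nonneg _), ← abs_inv, ← abs_inv, ← abs_mul, ← abs_neg]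
    congr 2
    field_simp
  rw [← restrict_compl_singleton (μ := (volume : Measure ℝ)) 0]
  conv_rhs => rw [← himage, lintegral_image_eq_lintegral_abs_deriv_mul
    (measurableSet_singleton _).compl hderiv hinj]
  exact setLIntegral_congr_fun (measurableSet_singleton _).compl fun s hs ↦ by
    rw [hjacobian hs, mul_assoc]

section IncidenceSymmetry

variable {E : Type*} [NormedAddCommGroup E] [InnerProductSpace ℝ E] [FiniteDimensional ℝ E]
  [MeasurableSpace E] [BorelSpace E]

lemma ae_inner_ne_zero (μ : Measure E) [μ.IsAddHaarMeasure] {z : E} (hz : z ≠ 0) :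
    ∀ᵐ y ∂μ, ⟪z, y⟫ ≠ 0 := by
  have hnull := Measure.addHaar_submodule μ _ (orthogonal_span_singleton_ne_top hz)
  filter_upwards [compl_mem_ae_iff.2 hnull] with y hy h
  exact hy (Submodule.mem_orthogonal_singleton_iff_inner_right.2 h)

lemma lintegral_inv_enorm_mul_neg_inner_div_comm [Nontrivial E] {h : E × ℝ → E × ℝ → ℝ≥0∞}
    (hh : Measurable h.uncurry) :
    ∫⁻ z : E, ∫⁻ y : E, ∫⁻ s : ℝ, ‖s‖ₑ⁻¹ * h (z, s) (y, -⟪z, y⟫ / s) =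
      ∫⁻ z : E, ∫⁻ y : E, ∫⁻ s : ℝ, ‖s‖ₑ⁻¹ * h (y, -⟪z, y⟫ / s) (z, s) := by
  have hmeas : Measurable fun p : (E × E) × ℝ ↦
      ‖p.2‖ₑ⁻¹ * h (p.1.1, -⟪p.1.1, p.1.2⟫ / p.2) (p.1.2, p.2) :=
    (by fun_prop : Measurable fun p : (E × E) × ℝ ↦ ‖p.2‖ₑ⁻¹).mul (hh.comp
      (by fun_prop : Measurable fun p : (E × E) × ℝ ↦
        ((p.1.1, -⟪p.1.1, p.1.2⟫ / p.2), (p.1.2, p.2))))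
  calc
    _ = ∫⁻ z : E, ∫⁻ y : E, ∫⁻ s : ℝ, ‖s‖ₑ⁻¹ * h (z, -⟪z, y⟫ / s) (y, s) := by
      refine lintegral_congr_ae ?_
      filter_upwards [Measure.ae_ne volume 0] with z hz
      refine lintegral_congr_ae ?_
      filter_upwards [ae_inner_ne_zero volume hz] with y hy
      rw [← lintegral_inv_enorm_mul_comp_div (neg_ne_zero.2 hy)]
      simp_rw [div_div_cancel₀ (neg_ne_zero.2 hy)]
    _ = ∫⁻ y : E, ∫⁻ z : E, ∫⁻ s : ℝ, ‖s‖ₑ⁻¹ * h (z, -⟪z, y⟫ / s) (y, s) :=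
      lintegral_lintegral_swap hmeas.lintegral_prod_right'.aemeasurable
    _ = _ := by
      simp_rw [real_inner_comm]

lemma lintegral_inv_enorm_inner_mul_lintegral_orthogonal {e : E} (he : ‖e‖ = 1)
    {g : E → E → ℝ≥0∞} (hg : Measurable g.uncurry) :
    ∫⁻ x : E, ‖⟪x, e⟫‖ₑ⁻¹ * ∫⁻ y : (ℝ ∙ e)ᗮ, g x (obliqueProj x e y) =
      ∫⁻ z : (ℝ ∙ e)ᗮ, ∫⁻ y : (ℝ ∙ e)ᗮ, ∫⁻ s : ℝ,
        ‖s‖ₑ⁻¹ * g (z + s • e) (y + (-⟪z, y⟫ / s) • e) := by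
  have hinner (z : (ℝ ∙ e)ᗮ) (s : ℝ) : ⟪(z : E) + s • e, e⟫ = s := by
    rw [inner_add_left, Submodule.mem_orthogonal_singleton_iff_inner_left.1 z.2,
      real_inner_smul_left, real_inner_self_eq_norm_sq, he]
    ring
  have hproj (z y : (ℝ ∙ e)ᗮ) (s : ℝ) :
      obliqueProj ((z : E) + s • e) e y = y + (-⟪z, y⟫ / s) • e := by
    rw [obliqueProj, hinner, inner_add_left, real_inner_smul_left,
      Submodule.mem_orthogonal_singleton_iff_inner_right.1 y.2, mul_zero, add_zero, neg_div,
      neg_smul, sub_eq_add_neg, Submodule.coe_inner]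
  have hgcomp {α : Type _} [MeasurableSpace α] {u v : α → E} (hu : Measurable u)
      (hv : Measurable v) : Measurable fun a ↦ g (u a) (v a) := hg.comp (hu.prodMk hv)
  rw [lintegral_eq_lintegral_orthogonal_lintegral he (by fun_prop)]
  refine lintegral_congr fun z ↦ ?_
  simp_rw [hinner, hproj]
  rw [← lintegral_lintegral_swap (by fun_prop)]
  exact lintegral_congr fun s ↦ (lintegral_const_mul _ (by fun_prop)).symm

lemma lintegral_inv_enorm_inner_mul_lintegral_orthogonal_comm {e : E} (he : ‖e‖ = 1)
    [Nontrivial (ℝ ∙ e)ᗮ] {g : E → E → ℝ≥0∞} (hg : Measurable g.uncurry) :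
    ∫⁻ x : E, ‖⟪x, e⟫‖ₑ⁻¹ * ∫⁻ y : (ℝ ∙ e)ᗮ, g x (obliqueProj x e y) =
      ∫⁻ x : E, ‖⟪x, e⟫‖ₑ⁻¹ * ∫⁻ y : (ℝ ∙ e)ᗮ, g (obliqueProj x e y) x := by
  have hswap : Measurable (fun x y ↦ g y x).uncurry := hg.comp measurable_swap
  rw [lintegral_inv_enorm_inner_mul_lintegral_orthogonal he hg,
    lintegral_inv_enorm_inner_mul_lintegral_orthogonal he hswap]
  let embed (p : (ℝ ∙ e)ᗮ × ℝ) : E := p.1 + p.2 • e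
  have hembed : Measurable embed := by fun_prop
  exact lintegral_inv_enorm_mul_neg_inner_div_comm (h := fun p q ↦ g (embed p) (embed q))
    (hg.comp (by fun_prop : Measurable fun p : ((ℝ ∙ e)ᗮ × ℝ) × (ℝ ∙ e)ᗮ × ℝ ↦
      (embed p.1, embed p.2)))

end IncidenceSymmetry

section FlagSymmetry

variable {E : Type*} [NormedAddCommGroup E] [InnerProductSpace ℝ E] [FiniteDimensional ℝ E]
  [MeasurableSpace E] [BorelSpace E]

open scoped Pointwise in
lemma ae_toSphere_notMem_submodule (μ : Measure E) [μ.IsAddHaarMeasure] {S : Submodule ℝ E}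
    (hS : S ≠ ⊤) : ∀ᵐ w : sphere (0 : E) 1 ∂μ.toSphere, (w : E) ∉ S := by
  have hcone : Set.Ioo (0 : ℝ) 1 •
      (Subtype.val '' (Subtype.val ⁻¹' S : Set (sphere (0 : E) 1))) ⊆ (S : Set E) := by
    rintro _ ⟨r, -, _, ⟨w, hw, rfl⟩, rfl⟩
    exact S.smul_mem r hw
  simp only [ae_iff, not_not]
  change μ.toSphere (Subtype.val ⁻¹' (S : Set E)) = 0
  rw [Measure.toSphere_apply' _
      (S.closed_of_finiteDimensional.measurableSet.preimage measurable_subtype_coe),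
    measure_mono_null hcone (Measure.addHaar_submodule μ S hS), mul_zero]

lemma ae_toSphere_inner_ne_zero (μ : Measure E) [μ.IsAddHaarMeasure] {e : E} (he : e ≠ 0) :
    ∀ᵐ w : sphere (0 : E) 1 ∂μ.toSphere, ⟪(w : E), e⟫ ≠ 0 := by
  filter_upwards [ae_toSphere_notMem_submodule μ (orthogonal_span_singleton_ne_top he)]
    with w hw h
  exact hw (Submodule.mem_orthogonal_singleton_iff_inner_left.2 h)

lemma lintegral_toSphere_orthogonal_eq_lintegral_obliqueProj {w e : E} (hw : ‖w‖ = 1)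
    (he : ‖e‖ = 1) (hwe : ⟪w, e⟫ ≠ 0) [Nontrivial (ℝ ∙ w)ᗮ] {f : E → ℝ≥0∞} (hf : Measurable f) :
    ∫⁻ v, f (v : (ℝ ∙ w)ᗮ) ∂(volume : Measure (ℝ ∙ w)ᗮ).toSphere =
      ‖⟪w, e⟫‖ₑ⁻¹ * ∫⁻ y : (ℝ ∙ e)ᗮ, radialWeight (finrank ℝ (ℝ ∙ w)ᗮ) (obliqueProj w e y) *
        f (‖obliqueProj w e y‖⁻¹ • obliqueProj w e y) := by
  rw [lintegral_toSphere_eq_lintegral_radialWeight volume (f := fun v : (ℝ ∙ w)ᗮ ↦ f v)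
    (by fun_prop)]
  exact lintegral_orthogonal_eq_lintegral_obliqueProj hw he hwe
    (f := fun x ↦ radialWeight (finrank ℝ (ℝ ∙ w)ᗮ) x * f (‖x‖⁻¹ • x)) (by fun_prop)

lemma lintegral_toSphere_inv_enorm_inner_mul [Nontrivial E] (μ : Measure E) [μ.IsAddHaarMeasure]
    (e : E) {f : E → ℝ≥0∞} (hf : Measurable f)
    (hfsmul : ∀ r : ℝ, 0 < r → ∀ x, f (r • x) = f x) :
    ∫⁻ w, ‖⟪(w : E), e⟫‖ₑ⁻¹ * f w ∂μ.toSphere =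
      ∫⁻ x, radialWeight (finrank ℝ E - 1) x * (‖⟪x, e⟫‖ₑ⁻¹ * f x) ∂μ := by
  let G (x : E) : ℝ≥0∞ := ‖x‖ₑ⁻¹ ^ (finrank ℝ E - 1) * (‖⟪x, e⟫‖ₑ⁻¹ * f x)
  have hGsmul (r : ℝ) (hr : 0 < r) (x : E) :
      G (r • x) = ENNReal.ofReal r⁻¹ ^ finrank ℝ E * G x := by
    simp only [G]
    rw [hfsmul r hr, real_inner_smul_left, inv_enorm_smul_of_pos hr, ← smul_eq_mul r,
      inv_enorm_smul_of_pos hr, ← Nat.sub_add_cancel (Module.finrank_pos (R := ℝ) (M := E)),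
      Nat.add_sub_cancel, pow_succ, mul_pow]
    ring
  calc
    _ = ∫⁻ w, G w ∂μ.toSphere := by
      simp [G, ← ofReal_norm]
    _ = ∫⁻ x, G x * logCutoff ‖x‖ ∂μ :=
      (lintegral_mul_logCutoff_eq_lintegral_toSphere μ (by fun_prop) hGsmul measurable_norm
        (fun r hr x ↦ by rw [norm_smul, Real.norm_of_nonneg hr.le]) fun x ↦ norm_pos_iff.2).symm
    _ = _ := by
      simp only [G, radialWeight, mul_right_comm]

lemma lintegral_toSphere_lintegral_toSphere_orthogonal_eq (hE : 1 < finrank ℝ E) {e : E}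
    (he : ‖e‖ = 1) {f : E → E → ℝ≥0∞} (hf : Measurable f.uncurry) :
    ∫⁻ w, (∫⁻ v, f w (v : (ℝ ∙ (w : E))ᗮ) ∂(volume : Measure (ℝ ∙ (w : E))ᗮ).toSphere)
        ∂(volume : Measure E).toSphere =
      ∫⁻ x : E, ‖⟪x, e⟫‖ₑ⁻¹ * ∫⁻ y : (ℝ ∙ e)ᗮ,
        radialWeight (finrank ℝ E - 1) x * radialWeight (finrank ℝ E - 1) (obliqueProj x e y) *
          f (‖x‖⁻¹ • x) (‖obliqueProj x e y‖⁻¹ • obliqueProj x e y) := by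
  have : Nontrivial E := Module.nontrivial_of_finrank_pos (R := ℝ) (by omega)
  have he0 : e ≠ 0 := norm_ne_zero_iff.1 (he ▸ one_ne_zero)
  have hfcomp {α : Type _} [MeasurableSpace α] {u v : α → E} (hu : Measurable u)
      (hv : Measurable v) : Measurable fun a ↦ f (u a) (v a) := hf.comp (hu.prodMk hv)
  let k := finrank ℝ E - 1
  let A (x : E) : ℝ≥0∞ := ∫⁻ y : (ℝ ∙ e)ᗮ, radialWeight k (obliqueProj x e y) *
    f (‖x‖⁻¹ • x) (‖obliqueProj x e y‖⁻¹ • obliqueProj x e y)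
  have hA : Measurable A := Measurable.lintegral_prod_right' (f := fun p : E × (ℝ ∙ e)ᗮ ↦
    radialWeight k (obliqueProj p.1 e p.2) *
      f (‖p.1‖⁻¹ • p.1) (‖obliqueProj p.1 e p.2‖⁻¹ • obliqueProj p.1 e p.2)) (by fun_prop)
  have hAsmul (r : ℝ) (hr : 0 < r) (x : E) : A (r • x) = A x := by
    simp only [A, obliqueProj_smul_left hr.ne', inv_norm_smul_smul_of_pos hr]
  calc
    _ = ∫⁻ w, ‖⟪(w : E), e⟫‖ₑ⁻¹ * A w ∂(volume : Measure E).toSphere := by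
      refine lintegral_congr_ae ?_
      filter_upwards [ae_toSphere_inner_ne_zero volume he0] with w hwe
      have hw0 : (w : E) ≠ 0 := ne_zero_of_mem_unit_sphere w
      have := nontrivial_orthogonal_span_singleton hE hw0
      have hk : finrank ℝ (ℝ ∙ (w : E))ᗮ = k :=
        Nat.eq_sub_of_add_eq (finrank_orthogonal_span_singleton_add_one hw0)
      rw [lintegral_toSphere_orthogonal_eq_lintegral_obliqueProj (norm_eq_of_mem_sphere w) he hwe
        (by fun_prop), hk]
      simp only [A, norm_eq_of_mem_sphere, inv_one, one_smul]
    _ = ∫⁻ x : E, radialWeight k x * (‖⟪x, e⟫‖ₑ⁻¹ * A x) :=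
      lintegral_toSphere_inv_enorm_inner_mul volume e hA hAsmul
    _ = _ := by
      refine lintegral_congr fun x ↦ ?_
      simp_rw [mul_assoc (radialWeight _ x)]
      rw [lintegral_const_mul _ (by fun_prop), mul_left_comm]

lemma lintegral_toSphere_lintegral_toSphere_orthogonal_comm (hE : 1 < finrank ℝ E)
    {f : E → E → ℝ≥0∞} (hf : Measurable f.uncurry) :
    ∫⁻ w, (∫⁻ v, f w (v : (ℝ ∙ (w : E))ᗮ) ∂(volume : Measure (ℝ ∙ (w : E))ᗮ).toSphere)
        ∂(volume : Measure E).toSphere =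
      ∫⁻ w, (∫⁻ v, f (v : (ℝ ∙ (w : E))ᗮ) w ∂(volume : Measure (ℝ ∙ (w : E))ᗮ).toSphere)
        ∂(volume : Measure E).toSphere := by
  have : Nontrivial E := Module.nontrivial_of_finrank_pos (R := ℝ) (by omega)
  obtain ⟨e, he⟩ := exists_norm_eq E zero_le_one
  have := nontrivial_orthogonal_span_singleton hE (norm_ne_zero_iff.1 (he ▸ one_ne_zero))
  have hg : Measurable (fun x y : E ↦ radialWeight (finrank ℝ E - 1) x *
      radialWeight (finrank ℝ E - 1) y * f (‖x‖⁻¹ • x) (‖y‖⁻¹ • y)).uncurry := by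
    have hdir : Measurable fun p : E × E ↦ (‖p.1‖⁻¹ • p.1, ‖p.2‖⁻¹ • p.2) := by fun_prop
    exact (by fun_prop : Measurable fun p : E × E ↦ radialWeight (finrank ℝ E - 1) p.1 *
      radialWeight (finrank ℝ E - 1) p.2).mul (hf.comp hdir)
  rw [lintegral_toSphere_lintegral_toSphere_orthogonal_eq hE he hf,
    lintegral_toSphere_lintegral_toSphere_orthogonal_eq hE he (f := fun x y ↦ f y x)
      (hf.comp measurable_swap),
    lintegral_inv_enorm_inner_mul_lintegral_orthogonal_comm he hg]
  refine lintegral_congr fun x ↦ congrArg _ (lintegral_congr fun y ↦ ?_)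
  rw [mul_comm (radialWeight _ x)]

end FlagSymmetry

section WeightedIdentity

variable {E : Type*} [NormedAddCommGroup E] [InnerProductSpace ℝ E] [FiniteDimensional ℝ E]
  [MeasurableSpace E] [BorelSpace E]

lemma lintegral_toSphere_orthogonal_inv_enorm_pow (hE : 1 < finrank ℝ E) {w e : E} (hw : ‖w‖ = 1)
    (he : ‖e‖ = 1) (hwe : ⟪w, e⟫ ≠ 0) :
    ∫⁻ v, ‖(ℝ ∙ e)ᗮ.orthogonalProjectionOnto (v : (ℝ ∙ w)ᗮ)‖ₑ⁻¹ ^ (finrank ℝ E - 1)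
        ∂(volume : Measure (ℝ ∙ w)ᗮ).toSphere =
      ‖⟪w, e⟫‖ₑ⁻¹ * (volume : Measure (ℝ ∙ e)ᗮ).toSphere Set.univ := by
  have hw0 : w ≠ 0 := norm_ne_zero_iff.1 (hw ▸ one_ne_zero)
  have he0 : e ≠ 0 := norm_ne_zero_iff.1 (he ▸ one_ne_zero)
  have hdimw := finrank_orthogonal_span_singleton_add_one hw0
  have hdime := finrank_orthogonal_span_singleton_add_one he0
  have := nontrivial_orthogonal_span_singleton hE hw0
  have := nontrivial_orthogonal_span_singleton hE he0
  let P (y : (ℝ ∙ w)ᗮ) : (ℝ ∙ e)ᗮ := (ℝ ∙ e)ᗮ.orthogonalProjectionOnto y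
  have hP : Measurable P := by fun_prop
  have hPsmul (r : ℝ) (y : (ℝ ∙ w)ᗮ) : P (r • y) = r • P y := map_smul _ r (y : E)
  calc
    _ = ∫⁻ y, ‖P y‖ₑ⁻¹ ^ (finrank ℝ E - 1) * logCutoff ‖P y‖ := by
      refine (lintegral_mul_logCutoff_eq_lintegral_toSphere volume
        (f := fun y ↦ ‖P y‖ₑ⁻¹ ^ (finrank ℝ E - 1)) (by fun_prop) (fun r hr y ↦ ?_)
        (N := fun y ↦ ‖P y‖) (by fun_prop) (fun r hr y ↦ ?_) fun y hy ↦ ?_).symm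
      · rw [hPsmul, inv_enorm_smul_of_pos hr, mul_pow, Nat.eq_sub_of_add_eq hdimw]
      · rw [hPsmul, norm_smul, Real.norm_of_nonneg hr.le]
      · exact norm_pos_iff.2 <| orthogonalProjectionOnto_ne_zero_of_inner_ne_zero hwe y.2 <|
          Submodule.coe_eq_zero.not.2 hy
    _ = ‖⟪w, e⟫‖ₑ⁻¹ * ∫⁻ y : (ℝ ∙ e)ᗮ, radialWeight (finrank ℝ E - 1) y :=
      lintegral_orthogonal_comp_orthogonalProjectionOnto hw he hwe (measurable_radialWeight _)
    _ = _ := by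
      rw [← lintegral_one, lintegral_toSphere_eq_lintegral_radialWeight volume measurable_const,
        Nat.eq_sub_of_add_eq hdime]
      simp_rw [mul_one]

lemma lintegral_inv_enorm_pow_mul_lintegral_toSphere_orthogonal (hE : 1 < finrank ℝ E) {e : E}
    (he : ‖e‖ = 1) {f : E → ℝ≥0∞} (hf : Measurable f) :
    ∫⁻ w, ‖(ℝ ∙ e)ᗮ.orthogonalProjectionOnto (w : E)‖ₑ⁻¹ ^ (finrank ℝ E - 1) *
        (∫⁻ v, f (v : (ℝ ∙ (w : E))ᗮ) ∂(volume : Measure (ℝ ∙ (w : E))ᗮ).toSphere)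
        ∂(volume : Measure E).toSphere =
      (volume : Measure (ℝ ∙ e)ᗮ).toSphere Set.univ *
        ∫⁻ v, f v * ‖⟪(v : E), e⟫‖ₑ⁻¹ ∂(volume : Measure E).toSphere := by
  let K (x : E) : ℝ≥0∞ := ‖(ℝ ∙ e)ᗮ.orthogonalProjectionOnto x‖ₑ⁻¹ ^ (finrank ℝ E - 1)
  have hK : Measurable K := by fun_prop
  have : Nontrivial E := Module.nontrivial_of_finrank_pos (R := ℝ) (by omega)
  have he0 : e ≠ 0 := norm_ne_zero_iff.1 (he ▸ one_ne_zero)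
  calc
    _ = ∫⁻ w, (∫⁻ v, K w * f (v : (ℝ ∙ (w : E))ᗮ) ∂(volume : Measure (ℝ ∙ (w : E))ᗮ).toSphere)
          ∂(volume : Measure E).toSphere :=
      lintegral_congr fun w ↦ (lintegral_const_mul _ (by fun_prop)).symm
    _ = ∫⁻ v, (∫⁻ w, K (w : (ℝ ∙ (v : E))ᗮ) * f v ∂(volume : Measure (ℝ ∙ (v : E))ᗮ).toSphere)
          ∂(volume : Measure E).toSphere :=
      lintegral_toSphere_lintegral_toSphere_orthogonal_comm hE (f := fun w v ↦ K w * f v)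
        (by fun_prop)
    _ = ∫⁻ v, (volume : Measure (ℝ ∙ e)ᗮ).toSphere Set.univ * (f v * ‖⟪(v : E), e⟫‖ₑ⁻¹)
          ∂(volume : Measure E).toSphere := by
      refine lintegral_congr_ae ?_
      filter_upwards [ae_toSphere_inner_ne_zero volume he0] with v hve
      rw [lintegral_mul_const _ (by fun_prop),
        lintegral_toSphere_orthogonal_inv_enorm_pow hE (norm_eq_of_mem_sphere v) he hve]
      ring
    _ = _ := lintegral_const_mul _ (by fun_prop)

lemma toSphere_univ_eq_of_finrank_eq {F : Type*} [NormedAddCommGroup F] [InnerProductSpace ℝ F]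
    [FiniteDimensional ℝ F] [MeasurableSpace F] [BorelSpace F] [Nontrivial E] [Nontrivial F]
    (h : finrank ℝ E = finrank ℝ F) :
    (volume : Measure E).toSphere Set.univ = (volume : Measure F).toSphere Set.univ := by
  rw [Measure.toSphere_apply_univ, Measure.toSphere_apply_univ, InnerProductSpace.volume_ball,
    InnerProductSpace.volume_ball, h]

end WeightedIdentity

section FunkTransform

lemma ofReal_norm_sq_rpow_neg_div_two {E : Type*} [NormedAddCommGroup E] (x : E) (k : ℕ) :
    ENNReal.ofReal (‖x‖ ^ 2) ^ (-(k : ℝ) / 2) = ‖x‖ₑ⁻¹ ^ k := by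
  rw [ENNReal.ofReal_pow (norm_nonneg x), ofReal_norm, ← ENNReal.rpow_natCast, ← ENNReal.rpow_mul,
    Nat.cast_ofNat, mul_div_cancel₀ _ two_ne_zero, ENNReal.rpow_neg, ENNReal.rpow_natCast,
    ENNReal.inv_pow]

lemma Funk_eq_lintegral_extend {n : ℕ} (hn : 2 ≤ n) {e : EuclideanSpace ℝ (Fin n)} (he : ‖e‖ = 1)
    (φ : sphere (0 : EuclideanSpace ℝ (Fin n)) 1 → ℝ≥0∞)
    (w : sphere (0 : EuclideanSpace ℝ (Fin n)) 1) :
    Funk n φ w = ((volume : Measure (ℝ ∙ e)ᗮ).toSphere Set.univ)⁻¹ *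
      ∫⁻ v, Function.extend Subtype.val φ 0 (v : (ℝ ∙ (w : EuclideanSpace ℝ (Fin n)))ᗮ)
        ∂(volume : Measure (ℝ ∙ (w : EuclideanSpace ℝ (Fin n)))ᗮ).toSphere := by
  have hE : 1 < finrank ℝ (EuclideanSpace ℝ (Fin n)) := by simpa
  have hw0 := ne_zero_of_mem_unit_sphere w
  have he0 : e ≠ 0 := norm_ne_zero_iff.1 (he ▸ one_ne_zero)
  have := nontrivial_orthogonal_span_singleton hE hw0
  have := nontrivial_orthogonal_span_singleton hE he0
  rw [Funk, toSphere_univ_eq_of_finrank_eq (F := (ℝ ∙ e)ᗮ)]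
  · congr with v
    exact (Subtype.val_injective.extend_apply φ 0 _).symm
  · exact Nat.add_right_cancel ((finrank_orthogonal_span_singleton_add_one hw0).trans
      (finrank_orthogonal_span_singleton_add_one he0).symm)

end FunkTransform

theorem stmt16_general {n : ℕ} (hn : 2 ≤ n) {e : EuclideanSpace ℝ (Fin n)} (he : ‖e‖ = 1)
    {φ : sphere (0 : EuclideanSpace ℝ (Fin n)) 1 → ℝ≥0∞} (hφ : Measurable φ) :
    ∫⁻ w, Funk n φ w *
        ENNReal.ofReal (1 - ⟪(w : EuclideanSpace ℝ (Fin n)), e⟫ ^ 2) ^ (-((n : ℝ) - 1) / 2)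
        ∂sphMeasure n =
      ∫⁻ θ, φ θ * ENNReal.ofReal |⟪(θ : EuclideanSpace ℝ (Fin n)), e⟫| ^ (-1 : ℝ)
        ∂sphMeasure n := by
  have hE : 1 < finrank ℝ (EuclideanSpace ℝ (Fin n)) := by simpa
  have := nontrivial_orthogonal_span_singleton hE (norm_ne_zero_iff.1 (he ▸ one_ne_zero))
  have hf : Measurable (Function.extend Subtype.val φ 0) :=
    (MeasurableEmbedding.subtype_coe isClosed_sphere.measurableSet).measurable_extend hφ
      measurable_zero
  have hweight (w : sphere (0 : EuclideanSpace ℝ (Fin n)) 1) :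
      ENNReal.ofReal (1 - ⟪(w : EuclideanSpace ℝ (Fin n)), e⟫ ^ 2) ^ (-((n : ℝ) - 1) / 2) =
        ‖(ℝ ∙ e)ᗮ.orthogonalProjectionOnto (w : EuclideanSpace ℝ (Fin n))‖ₑ⁻¹ ^ (n - 1) := by
    rw [one_sub_inner_sq_eq_norm_orthogonalProjectionOnto_sq (norm_eq_of_mem_sphere w) he,
      ← ofReal_norm_sq_rpow_neg_div_two, Nat.cast_pred (by omega)]
  have hσ : (volume : Measure (ℝ ∙ e)ᗮ).toSphere Set.univ ≠ 0 :=
    Measure.measure_univ_ne_zero.2 (Measure.toSphere_ne_zero _)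
  have hmain := lintegral_inv_enorm_pow_mul_lintegral_toSphere_orthogonal hE he hf
  rw [finrank_euclideanSpace_fin] at hmain
  simp_rw [sphMeasure, lintegral_smul_measure, hweight, Funk_eq_lintegral_extend hn he,
    mul_assoc, ENNReal.rpow_neg_one, ← Real.enorm_eq_ofReal_abs]
  rw [lintegral_const_mul' _ _ (ENNReal.inv_ne_top.2 hσ)]
  simp_rw [mul_comm (lintegral _ _)]
  rw [hmain, ← mul_assoc _ (Measure.toSphere _ _), ENNReal.inv_mul_cancel hσ (measure_ne_top _ _),
    one_mul]
  simp_rw [Subtype.val_injective.extend_apply]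

/-- Weighted identity for the `m`-th dual volumes `Ṽ_m(L ∩ w^⊥) = b_{n-1}(Fρ_L^m)(w)` of
central hyperplane sections of a star set (case `k = n-1`). -/
theorem stmt16 (n : ℕ) (hn : 3 ≤ n) (L : Set (EuclideanSpace ℝ (Fin n)))
    (hL : MeasurableSet L)
    (hstar : ∀ x ∈ L, ∀ lam : ℝ, 0 ≤ lam → lam ≤ 1 → lam • x ∈ L)
    (hρ : Measurable (radial n L)) (m : ℝ) (hm : 0 < m) :
    (∫⁻ w, ENNReal.ofReal (ballVol (n - 1)) *
        Funk n (fun θ => radial n L θ ^ m) w *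
        ENNReal.ofReal (1 - ((w : EuclideanSpace ℝ (Fin n)) ⟨n - 1, by omega⟩) ^ 2) ^
          (-((n : ℝ) - 1) / 2) ∂(sphMeasure n)) =
      ENNReal.ofReal (ballVol (n - 1)) *
        ∫⁻ θ, radial n L θ ^ m *
          ENNReal.ofReal |(θ : EuclideanSpace ℝ (Fin n)) ⟨n - 1, by omega⟩| ^ (-1 : ℝ)
          ∂(sphMeasure n) := by
  simp_rw [mul_assoc]
  rw [lintegral_const_mul' _ _ ENNReal.ofReal_ne_top]
  simpa [EuclideanSpace.inner_single_right] using congrArg _ (stmt16_general (by omega)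
    (e := EuclideanSpace.single ⟨n - 1, by omega⟩ 1) (by simp) (hρ.pow_const m))
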